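/- Parseval relation for the fractional Hankel transform: let ν ≥ −1/2, μ, θ ∈ ℝ with 0 < θ < π, θ ≠ π/2 allowed, sin θ ≠ 0. For f, g in a suitable dense class (e.g., smooth compactly supported functions on (0,∞)), ∫₀^∞ f(t) conj(g(t)) t^{1+2μ} dt = ∫₀^∞ (H^θ_{ν,μ}f)(ω) conj((H^θ_{ν,μ}g)(ω)) ω^{1+2μ} dω, where (H^θ_{ν,μ}f)(ω) = ∫₀^∞ K^θ(t,ω) f(t) dt with kernel K^θ(t,ω) = C_{ν,μ,θ} e^{(i/2)(t²+ω²)cot θ} (tω csc θ)^{−μ} J_ν(tω csc θ) t^{1+2μ} and C_{ν,μ,θ} = e^{i(1+ν)(θ−π/2)}/(sin θ)^{1+μ}. -/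

import Mathlib

open MeasureTheory Complex

/-- Bessel function of the first kind of real order `ν`. -/
noncomputable def besselJ (ν x : ℝ) : ℝ :=
  ∑' m : ℕ, ((-1 : ℝ) ^ m / (m.factorial * Real.Gamma (m + ν + 1))) *
    (x / 2) ^ ((2 * m : ℝ) + ν)

/-- The constant `C_{ν,μ,θ} = e^{i(1+ν)(θ−π/2)}/(sin θ)^{1+μ}`. -/
noncomputable def fracHankelConst (ν μ θ : ℝ) : ℂ :=
  Complex.exp (I * ((1 + ν : ℝ) : ℂ) * ((θ - Real.pi / 2 : ℝ) : ℂ)) /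
    ((Real.sin θ ^ (1 + μ) : ℝ) : ℂ)

/-- The kernel `K^θ(t,ω)` of the fractional Hankel transform. -/
noncomputable def fracHankelKernel (ν μ θ : ℝ) (t ω : ℝ) : ℂ :=
  fracHankelConst ν μ θ *
    Complex.exp ((I / 2) * ((t : ℂ) ^ 2 + (ω : ℂ) ^ 2) * (Real.cot θ : ℂ)) *
    (((t * ω * (Real.sin θ)⁻¹) ^ (-μ) : ℝ) : ℂ) *
    ((besselJ ν (t * ω * (Real.sin θ)⁻¹) : ℝ) : ℂ) *
    ((t ^ (1 + 2 * μ) : ℝ) : ℂ)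

/-- The fractional Hankel transform `H^θ_{ν,μ}`. -/
noncomputable def fracHankel (ν μ θ : ℝ) (f : ℝ → ℂ) (ω : ℝ) : ℂ :=
  ∫ t in Set.Ioi (0 : ℝ), fracHankelKernel ν μ θ t ω * f t

/-!
The symmetric Hankel transform `φ ↦ ∫ √(xt) J_ν(xt) φ(t) dt` sends the Gaussian
`G_q(t) = q^((ν+1)/2) t^(ν+1/2) exp(-qt²/2)` to `G_{1/q}`, by integrating the power series of `J_ν`
term by term. The Gram matrix
`⟨G_p, G_q⟩ = (Γ(ν+1)/2) (pq / ((p+q)/2)²)^((ν+1)/2)` is invariant under `p, q ↦ 1/p, 1/q`, and the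
`G_q` are total in `L²(0, ∞)`: up to a constant `G_{n+1}` is `yⁿ G_1` with
`y = exp(-t²/2) ∈ [0, 1]`, so totality is Weierstrass approximation in `y`. Hence `G_q ↦ G_{1/q}`
extends to an isometry of `L²(0, ∞)`, and testing against the `G_q` identifies it with the Hankel
transform on compactly supported functions. The fractional transform is the Hankel transform
composed with unimodular chirps, power weights and the dilation by `1 / sin θ`.
-/

open Set Filter
open scoped Topology

local notation "vol₊" => Measure.restrict (volume : Measure ℝ) (Ioi 0)

theorem continuous_comp_sqrt_neg_two_mul_log {X : Type*} [TopologicalSpace X] {k : ℝ → X}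
    (hk : Continuous k) (hk_lim : Tendsto k atTop (𝓝 (k 0))) :
    Continuous fun y ↦ k √(-2 * Real.log y) := by
  refine continuous_iff_continuousAt.2 fun y ↦ ?_
  obtain rfl | hy := eq_or_ne y 0
  · refine continuousWithinAt_compl_self.1 ?_
    have hsqrt : Tendsto (fun y ↦ √(-2 * Real.log y)) (𝓝[≠] 0) atTop :=
      Real.tendsto_sqrt_atTop.comp
        (Real.tendsto_log_nhdsNE_zero.const_mul_atBot_of_neg (by norm_num))
    simpa [ContinuousWithinAt, Function.comp_def] using hk_lim.comp hsqrt
  · have := Real.continuousAt_log hy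
    fun_prop

section Moments

variable {α E : Type*} [MeasurableSpace α] {μ : Measure α}
  [NormedAddCommGroup E] [NormedSpace ℝ E]

theorem integrable_comp_smul_of_mem_Icc {s : α → ℝ} {F : α → E} {a b : ℝ}
    (hs : AEStronglyMeasurable s μ) (hs_mem : ∀ x, s x ∈ Icc a b) (hF : Integrable F μ)
    {c : ℝ → ℝ} (hc : Continuous c) : Integrable (fun x ↦ c (s x) • F x) μ := by
  obtain ⟨C, hC⟩ := isCompact_Icc.exists_bound_of_continuousOn (s := Icc a b) hc.continuousOn
  exact hF.bdd_smul C (hc.comp_aestronglyMeasurable hs) (.of_forall fun x ↦ hC _ (hs_mem x))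

theorem integral_eval_smul_eq_zero_of_forall_pow {s : α → ℝ} {F : α → E} {a b : ℝ}
    (hs : AEStronglyMeasurable s μ) (hs_mem : ∀ x, s x ∈ Icc a b) (hF : Integrable F μ)
    (hmom : ∀ n : ℕ, ∫ x, s x ^ n • F x ∂μ = 0) (P : Polynomial ℝ) :
    ∫ x, P.eval (s x) • F x ∂μ = 0 := by
  simp only [Polynomial.eval_eq_sum_range, Finset.sum_smul]
  rw [integral_finsetSum _ fun n _ ↦ integrable_comp_smul_of_mem_Icc hs hs_mem hF
    (c := fun y ↦ P.coeff n * y ^ n) (by fun_prop)]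
  simp only [mul_smul, integral_smul, hmom, smul_zero, Finset.sum_const_zero]

theorem integral_comp_smul_eq_zero_of_forall_pow {s : α → ℝ} {F : α → E} {a b : ℝ}
    (hs : AEStronglyMeasurable s μ) (hs_mem : ∀ x, s x ∈ Icc a b) (hF : Integrable F μ)
    (hmom : ∀ n : ℕ, ∫ x, s x ^ n • F x ∂μ = 0) {c : ℝ → ℝ} (hc : Continuous c) :
    ∫ x, c (s x) • F x ∂μ = 0 := by
  have hbound : ∀ ε > 0, ‖∫ x, c (s x) • F x ∂μ‖ ≤ ε * ∫ x, ‖F x‖ ∂μ := by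
    intro ε hε
    obtain ⟨P, hP⟩ := exists_polynomial_near_of_continuousOn a b c hc.continuousOn ε hε
    have hsub := integral_sub (integrable_comp_smul_of_mem_Icc hs hs_mem hF hc)
      (integrable_comp_smul_of_mem_Icc hs hs_mem hF P.continuous)
    rw [integral_eval_smul_eq_zero_of_forall_pow hs hs_mem hF hmom P, sub_zero] at hsub
    rw [← hsub, ← integral_const_mul]
    refine norm_integral_le_of_norm_le (hF.norm.const_mul ε) (.of_forall fun x ↦ ?_)
    rw [← sub_smul, norm_smul, Real.norm_eq_abs, abs_sub_comm]
    gcongr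
    exact (hP _ (hs_mem x)).le
  have hlim : Tendsto (fun ε : ℝ ↦ ε * ∫ x, ‖F x‖ ∂μ) (𝓝[>] 0) (𝓝 0) :=
    tendsto_nhdsWithin_of_tendsto_nhds (by simpa using (continuous_mul_const _).tendsto (0 : ℝ))
  exact norm_le_zero_iff.1 (ge_of_tendsto hlim (eventually_mem_nhdsWithin.mono hbound))

theorem ae_eq_zero_of_forall_integral_exp_neg_sq_pow_smul [CompleteSpace E] {F : ℝ → E}
    (hF : IntegrableOn F (Ioi 0))
    (hmom : ∀ n : ℕ, ∫ x in Ioi (0 : ℝ), Real.exp (-(x ^ 2 / 2)) ^ n • F x = 0) :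
    F =ᵐ[vol₊] 0 := by
  have hs_mem (x : ℝ) : Real.exp (-(x ^ 2 / 2)) ∈ Icc (0 : ℝ) 1 :=
    ⟨by positivity, Real.exp_le_one_iff.2 (by linarith [sq_nonneg x])⟩
  refine (ae_restrict_iff' measurableSet_Ioi).2
    (isOpen_Ioi.ae_eq_zero_of_integral_contDiff_smul_eq_zero hF.locallyIntegrableOn ?_)
  intro k hk hk_supp hk_sub
  have hk_zero : ∀ x ∉ Ioi (0 : ℝ), k x = 0 := fun x hx ↦
    image_eq_zero_of_notMem_tsupport fun hmem ↦ hx (hk_sub hmem)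
  have hk_lim : Tendsto k atTop (𝓝 (k 0)) := by
    rw [hk_zero 0 self_notMem_Ioi]
    exact hk_supp.is_zero_at_infty.mono_left atTop_le_cocompact
  -- In the variable `y = exp (-x² / 2)` the test function is `y ↦ k √(-2 log y)`.
  rw [← setIntegral_eq_integral_of_forall_compl_eq_zero (s := Ioi 0)
      fun x hx ↦ by rw [hk_zero x hx, zero_smul],
    ← integral_comp_smul_eq_zero_of_forall_pow (by fun_prop) hs_mem hF hmom
      (continuous_comp_sqrt_neg_two_mul_log hk.continuous hk_lim)]
  refine setIntegral_congr_fun measurableSet_Ioi fun x (hx : 0 < x) ↦ ?_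
  have hinv : √(-2 * Real.log (Real.exp (-(x ^ 2 / 2)))) = x := by
    rw [Real.log_exp, show -2 * -(x ^ 2 / 2) = x ^ 2 by ring, Real.sqrt_sq hx.le]
  simp only [hinv]

end Moments

theorem exists_linearIsometry_apply_eq {𝕜 ι H K : Type*} [RCLike 𝕜]
    [NormedAddCommGroup H] [InnerProductSpace 𝕜 H]
    [NormedAddCommGroup K] [InnerProductSpace 𝕜 K] [CompleteSpace K]
    {v : ι → H} {w : ι → K} (hv : Dense (Submodule.span 𝕜 (range v) : Set H))
    (hvw : ∀ i j, inner 𝕜 (w i) (w j) = inner 𝕜 (v i) (v j)) :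
    ∃ U : H →ₗᵢ[𝕜] K, ∀ i, U (v i) = w i := by
  let V := Finsupp.linearCombination 𝕜 v
  let W := Finsupp.linearCombination 𝕜 w
  have hnorm (c : ι →₀ 𝕜) : ‖W c‖ = ‖V c‖ := by
    simp only [V, W, norm_eq_sqrt_re_inner (𝕜 := 𝕜), Finsupp.linearCombination_apply, Finsupp.sum,
      sum_inner, inner_sum, inner_smul_left, inner_smul_right, hvw]
  have hdense : DenseRange V := by
    rwa [DenseRange, ← LinearMap.coe_range, Finsupp.range_linearCombination]
  have hext (c : ι →₀ 𝕜) : W.extendOfNorm V (V c) = W c :=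
    LinearMap.extendOfNorm_eq hdense ⟨1, fun c ↦ by rw [one_mul, hnorm]⟩ c
  refine ⟨⟨W.extendOfNorm V, fun x ↦ ?_⟩, fun i ↦ ?_⟩
  · refine hdense.induction_on x (isClosed_eq (by fun_prop) continuous_norm) fun c ↦ ?_
    exact (congrArg norm (hext c)).trans (hnorm c)
  · simpa [V, W] using hext (Finsupp.single i 1)

section BesselClifford

variable {ν : ℝ}

/-- The Bessel–Clifford function `∑ zᵐ / (m! Γ(m + ν + 1))`: the entire function for which
`J_ν(y) = (y/2)^ν C_ν(-(y/2)²)`. -/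
noncomputable def besselClifford (ν z : ℝ) : ℝ :=
  ∑' m : ℕ, z ^ m / (m.factorial * Real.Gamma (m + ν + 1))

theorem besselJ_eq_rpow_mul_besselClifford (ν : ℝ) {y : ℝ} (hy : 0 < y) :
    besselJ ν y = (y / 2) ^ ν * besselClifford ν (-(y / 2) ^ 2) := by
  rw [besselJ, besselClifford, ← tsum_mul_left]
  refine tsum_congr fun m ↦ ?_
  have hpow : (y / 2) ^ (2 * m + ν : ℝ) = ((y / 2) ^ 2) ^ m * (y / 2) ^ ν := by
    rw [← pow_mul, Real.rpow_add (half_pos hy), ← Real.rpow_natCast]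
    push_cast
    rfl
  rw [hpow, neg_pow ((y / 2) ^ 2)]
  ring

theorem measurable_besselJ (ν : ℝ) : Measurable (besselJ ν) :=
  Measurable.tsum fun _ ↦ by fun_prop

theorem Gamma_mul_min_pow_mul_factorial_le (hν : -1 < ν) (m : ℕ) :
    Real.Gamma (ν + 1) * min 1 (ν + 1) ^ m * m.factorial ≤ Real.Gamma (m + ν + 1) := by
  have hmin : 0 < min 1 (ν + 1) := lt_min one_pos (by linarith)
  induction m with
  | zero => simp
  | succ m ih =>
    have hfactor : min 1 (ν + 1) * (m + 1) ≤ m + ν + 1 := by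
      nlinarith [min_le_left 1 (ν + 1), min_le_right 1 (ν + 1), m.cast_nonneg (α := ℝ)]
    have hrec : Real.Gamma ((m + 1 : ℕ) + ν + 1) = (m + ν + 1) * Real.Gamma (m + ν + 1) := by
      rw [← Real.Gamma_add_one (by linarith [m.cast_nonneg (α := ℝ)])]
      push_cast
      ring_nf
    have hΓ : 0 < Real.Gamma (ν + 1) := Real.Gamma_pos_of_pos (by linarith)
    calc Real.Gamma (ν + 1) * min 1 (ν + 1) ^ (m + 1) * (m + 1).factorial
      _ = min 1 (ν + 1) * (m + 1) *
          (Real.Gamma (ν + 1) * min 1 (ν + 1) ^ m * m.factorial) := by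
        rw [Nat.factorial_succ]
        push_cast
        ring
      _ ≤ (m + ν + 1) * Real.Gamma (m + ν + 1) := by
        gcongr
        linarith [m.cast_nonneg (α := ℝ)]
      _ = _ := hrec.symm

-- With `|z|` proportional to `x² t²`, taking `a ~ t²/q` and `b ~ q x²` gives a product bound in `x`
-- and `t` whose growth in `x` is absorbed by a Gaussian.
theorem norm_besselClifford_term_le (hν : -1 < ν) {a b z : ℝ} (ha : 0 ≤ a) (hb : 0 ≤ b)
    (hz : |z| ≤ min 1 (ν + 1) * (a * b)) (m : ℕ) :
    ‖z ^ m / (m.factorial * Real.Gamma (m + ν + 1))‖ ≤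
      Real.exp b / Real.Gamma (ν + 1) * (a ^ m / m.factorial) := by
  have hmin : 0 < min 1 (ν + 1) := lt_min one_pos (by linarith)
  have hΓ : 0 < Real.Gamma (ν + 1) := Real.Gamma_pos_of_pos (by linarith)
  have hΓm := Gamma_mul_min_pow_mul_factorial_le hν m
  have hpos : 0 < Real.Gamma (m + ν + 1) := lt_of_lt_of_le (by positivity) hΓm
  calc ‖z ^ m / (m.factorial * Real.Gamma (m + ν + 1))‖
    _ = |z| ^ m / (m.factorial * Real.Gamma (m + ν + 1)) := by
      rw [norm_div, norm_pow, Real.norm_eq_abs, Real.norm_of_nonneg (by positivity)]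
    _ ≤ (min 1 (ν + 1) * (a * b)) ^ m /
        (m.factorial * (Real.Gamma (ν + 1) * min 1 (ν + 1) ^ m * m.factorial)) := by gcongr
    _ = b ^ m / m.factorial / Real.Gamma (ν + 1) * (a ^ m / m.factorial) := by
      field_simp
      ring
    _ ≤ _ := by
      gcongr
      exact Real.pow_div_factorial_le_exp b hb m

theorem hasSum_pow_div_factorial (x : ℝ) :
    HasSum (fun m : ℕ ↦ x ^ m / m.factorial) (Real.exp x) := by
  rw [Real.exp_eq_exp_ℝ]
  exact NormedSpace.expSeries_div_hasSum_exp x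

theorem abs_besselClifford_le (hν : -1 < ν) {a b z : ℝ} (ha : 0 ≤ a) (hb : 0 ≤ b)
    (hz : |z| ≤ min 1 (ν + 1) * (a * b)) :
    |besselClifford ν z| ≤ Real.exp (a + b) / Real.Gamma (ν + 1) :=
  calc |besselClifford ν z|
    _ ≤ Real.exp b / Real.Gamma (ν + 1) * Real.exp a :=
      tsum_of_norm_bounded ((hasSum_pow_div_factorial a).mul_left _)
        (norm_besselClifford_term_le hν ha hb hz)
    _ = _ := by rw [Real.exp_add]; ring

theorem hasSum_besselClifford (hν : -1 < ν) (z : ℝ) :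
    HasSum (fun m : ℕ ↦ z ^ m / (m.factorial * Real.Gamma (m + ν + 1))) (besselClifford ν z) := by
  have hmin : 0 < min 1 (ν + 1) := lt_min one_pos (by linarith)
  refine (Summable.of_norm_bounded
    ((hasSum_pow_div_factorial (|z| / min 1 (ν + 1))).summable.mul_left _)
    (norm_besselClifford_term_le hν (by positivity) zero_le_one ?_)).hasSum
  rw [mul_one, mul_div_cancel₀ _ hmin.ne']

theorem integrableOn_rpow_mul_exp_neg_mul_sq_half {β q : ℝ} (hβ : -1 < β) (hq : 0 < q) :
    IntegrableOn (fun t ↦ t ^ (2 * β + 1) * Real.exp (-(q * t ^ 2 / 2))) (Ioi 0) := by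
  convert integrableOn_rpow_mul_exp_neg_mul_sq (half_pos hq) (s := 2 * β + 1) (by linarith)
    using 5
  ring

theorem integral_rpow_mul_exp_neg_mul_sq_half {β q : ℝ} (hβ : -1 < β) (hq : 0 < q) :
    ∫ t in Ioi (0 : ℝ), t ^ (2 * β + 1) * Real.exp (-(q * t ^ 2 / 2)) =
      (q / 2) ^ (-(β + 1)) / 2 * Real.Gamma (β + 1) := by
  convert integral_rpow_mul_exp_neg_mul_rpow (p := 2) (q := 2 * β + 1) two_pos (by linarith)
    (half_pos hq) using 1
  · refine integral_congr_ae (.of_forall fun t ↦ ?_)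
    simp only [Real.rpow_two]
    ring_nf
  · ring_nf

theorem integral_besselClifford_term_mul_gaussian (hν : -1 < ν) {q : ℝ} (hq : 0 < q) (z : ℝ)
    (m : ℕ) :
    ∫ t in Ioi (0 : ℝ), z ^ m / (m.factorial * Real.Gamma (m + ν + 1)) *
        (t ^ (2 * (m + ν) + 1) * Real.exp (-(q * t ^ 2 / 2))) =
      (q / 2) ^ (-(ν + 1)) / 2 * ((2 * z / q) ^ m / m.factorial) := by
  have hm : -1 < m + ν := by linarith [m.cast_nonneg (α := ℝ)]
  have hΓ : Real.Gamma (m + ν + 1) ≠ 0 := (Real.Gamma_pos_of_pos (by linarith)).ne'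
  have hpow : (q / 2) ^ (-(m + ν + 1)) = (q / 2) ^ (-(ν + 1)) / (q / 2) ^ m := by
    rw [← Real.rpow_natCast, ← Real.rpow_sub (half_pos hq)]
    ring_nf
  rw [integral_const_mul, integral_rpow_mul_exp_neg_mul_sq_half hm hq, hpow,
    show 2 * z / q = z / (q / 2) by field_simp, div_pow z]
  field_simp

theorem integral_besselClifford_mul_gaussian (hν : -1 < ν) {q : ℝ} (hq : 0 < q) (z : ℝ) :
    ∫ t in Ioi (0 : ℝ), besselClifford ν (z * t ^ 2) *
        (t ^ (2 * ν + 1) * Real.exp (-(q * t ^ 2 / 2))) =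
      (q / 2) ^ (-(ν + 1)) / 2 * Real.exp (2 * z / q) := by
  let F (z : ℝ) (m : ℕ) (t : ℝ) : ℝ := z ^ m / (m.factorial * Real.Gamma (m + ν + 1)) *
    (t ^ (2 * (m + ν) + 1) * Real.exp (-(q * t ^ 2 / 2)))
  have hm (m : ℕ) : -1 < m + ν := by linarith [m.cast_nonneg (α := ℝ)]
  have hF (m : ℕ) : IntegrableOn (F z m) (Ioi 0) :=
    (integrableOn_rpow_mul_exp_neg_mul_sq_half (hm m) hq).const_mul _
  have hnorm (m : ℕ) : ∫ t in Ioi (0 : ℝ), ‖F z m t‖ = ∫ t in Ioi (0 : ℝ), F |z| m t := by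
    refine setIntegral_congr_fun measurableSet_Ioi fun t (ht : 0 < t) ↦ ?_
    have hΓ : 0 < Real.Gamma (m + ν + 1) := Real.Gamma_pos_of_pos (by linarith [hm m])
    rw [norm_mul, norm_div, norm_pow, Real.norm_eq_abs, Real.norm_of_nonneg (by positivity),
      Real.norm_of_nonneg (by positivity)]
  have hexp (z : ℝ) : HasSum (fun m ↦ ∫ t in Ioi (0 : ℝ), F z m t)
      ((q / 2) ^ (-(ν + 1)) / 2 * Real.exp (2 * z / q)) := by
    simp only [F, integral_besselClifford_term_mul_gaussian hν hq]
    exact (hasSum_pow_div_factorial _).mul_left _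
  have hsum := hasSum_integral_of_summable_integral_norm hF
    (by simpa only [hnorm] using (hexp |z|).summable)
  rw [← hsum.unique (hexp z)]
  refine setIntegral_congr_fun measurableSet_Ioi fun t (ht : 0 < t) ↦ ?_
  rw [← (hasSum_besselClifford hν (z * t ^ 2)).tsum_eq, ← tsum_mul_right]
  refine tsum_congr fun m ↦ ?_
  have hpow : t ^ (2 * (m + ν) + 1) = (t ^ 2) ^ m * t ^ (2 * ν + 1) := by
    rw [← pow_mul, ← Real.rpow_natCast, ← Real.rpow_add ht]
    push_cast
    ring_nf
  simp only [F, hpow, mul_pow]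
  ring

end BesselClifford

section HankelGaussian

variable {ν p q : ℝ}

/-- The symmetric kernel `√y J_ν(y)` of the Hankel transform on `L²(0, ∞)`. -/
noncomputable def hankelKernel (ν y : ℝ) : ℝ :=
  √y * besselJ ν y

/-- The functions `q^((ν+1)/2) t^(ν+1/2) exp(-qt²/2)`, normalised so that the Hankel transform of
order `ν` sends the one with parameter `q` to the one with parameter `q⁻¹`. -/
noncomputable def hankelGaussian (ν q t : ℝ) : ℝ :=
  q ^ ((ν + 1) / 2) * t ^ (ν + 1 / 2) * Real.exp (-(q * t ^ 2 / 2))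

theorem measurable_hankelKernel (ν : ℝ) : Measurable (hankelKernel ν) :=
  Real.continuous_sqrt.measurable.mul (measurable_besselJ ν)

theorem measurable_hankelGaussian (ν q : ℝ) : Measurable (hankelGaussian ν q) := by
  unfold hankelGaussian
  fun_prop

theorem hankelKernel_eq (ν : ℝ) {y : ℝ} (hy : 0 < y) :
    hankelKernel ν y = 2 ^ (-ν) * y ^ (ν + 1 / 2) * besselClifford ν (-(y / 2) ^ 2) := by
  rw [hankelKernel, besselJ_eq_rpow_mul_besselClifford ν hy, Real.sqrt_eq_rpow,
    Real.rpow_add hy, Real.div_rpow hy.le two_pos.le, Real.rpow_neg two_pos.le]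
  ring

theorem hankelGaussian_mul_hankelGaussian (hp : 0 < p) (hq : 0 < q) {t : ℝ} (ht : 0 < t) :
    hankelGaussian ν p t * hankelGaussian ν q t =
      (p * q) ^ ((ν + 1) / 2) * (t ^ (2 * ν + 1) * Real.exp (-((p + q) * t ^ 2 / 2))) := by
  rw [show 2 * ν + 1 = (ν + 1 / 2) + (ν + 1 / 2) by ring, Real.rpow_add ht,
    show -((p + q) * t ^ 2 / 2) = -(p * t ^ 2 / 2) + -(q * t ^ 2 / 2) by ring, Real.exp_add,
    Real.mul_rpow hp.le hq.le, hankelGaussian, hankelGaussian]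
  ring

theorem integrableOn_hankelGaussian_mul (hν : -1 < ν) (hp : 0 < p) (hq : 0 < q) :
    IntegrableOn (fun t ↦ hankelGaussian ν p t * hankelGaussian ν q t) (Ioi 0) :=
  IntegrableOn.congr_fun
    ((integrableOn_rpow_mul_exp_neg_mul_sq_half hν (add_pos hp hq)).const_mul _)
    (fun _ ht ↦ (hankelGaussian_mul_hankelGaussian hp hq ht).symm) measurableSet_Ioi

theorem memLp_hankelGaussian (hν : -1 < ν) (hq : 0 < q) :
    MemLp (fun t ↦ (hankelGaussian ν q t : ℂ)) 2 vol₊ := by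
  refine MemLp.ofReal ((memLp_two_iff_integrable_sq
    (measurable_hankelGaussian ν q).aestronglyMeasurable).2 ?_)
  simpa only [sq, IntegrableOn] using integrableOn_hankelGaussian_mul hν hq hq

theorem integral_hankelGaussian_mul (hν : -1 < ν) (hp : 0 < p) (hq : 0 < q) :
    ∫ t in Ioi (0 : ℝ), hankelGaussian ν p t * hankelGaussian ν q t =
      (p * q) ^ ((ν + 1) / 2) * (((p + q) / 2) ^ (-(ν + 1)) / 2 * Real.Gamma (ν + 1)) := by
  rw [← integral_rpow_mul_exp_neg_mul_sq_half hν (add_pos hp hq), ← integral_const_mul]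
  exact setIntegral_congr_fun measurableSet_Ioi
    fun _ ht ↦ hankelGaussian_mul_hankelGaussian hp hq ht

theorem integral_hankelGaussian_inv_mul_inv (hν : -1 < ν) (hp : 0 < p) (hq : 0 < q) :
    ∫ t in Ioi (0 : ℝ), hankelGaussian ν p⁻¹ t * hankelGaussian ν q⁻¹ t =
      ∫ t in Ioi (0 : ℝ), hankelGaussian ν p t * hankelGaussian ν q t := by
  rw [integral_hankelGaussian_mul hν hp hq,
    integral_hankelGaussian_mul hν (inv_pos.2 hp) (inv_pos.2 hq)]
  have hpq : 0 < p * q := mul_pos hp hq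
  have hmean : (p⁻¹ + q⁻¹) / 2 = (p + q) / 2 / (p * q) := by
    field_simp
    ring
  have hsplit : (p * q) ^ (ν + 1) = (p * q) ^ ((ν + 1) / 2) * (p * q) ^ ((ν + 1) / 2) := by
    rw [← Real.rpow_add hpq, add_halves]
  rw [hmean, ← mul_inv, Real.inv_rpow hpq.le, Real.div_rpow (by positivity) hpq.le,
    Real.rpow_neg hpq.le, hsplit]
  field_simp

theorem integral_hankelKernel_mul_hankelGaussian (hν : -1 < ν) (hq : 0 < q) {x : ℝ}
    (hx : 0 < x) :
    ∫ t in Ioi (0 : ℝ), hankelKernel ν (x * t) * hankelGaussian ν q t =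
      hankelGaussian ν q⁻¹ x := by
  have hintegrand : ∀ t ∈ Ioi (0 : ℝ), hankelKernel ν (x * t) * hankelGaussian ν q t =
      2 ^ (-ν) * q ^ ((ν + 1) / 2) * x ^ (ν + 1 / 2) * (besselClifford ν (-(x / 2) ^ 2 * t ^ 2) *
        (t ^ (2 * ν + 1) * Real.exp (-(q * t ^ 2 / 2)))) := by
    intro t (ht : 0 < t)
    rw [hankelKernel_eq ν (mul_pos hx ht), hankelGaussian, Real.mul_rpow hx.le ht.le,
      show 2 * ν + 1 = (ν + 1 / 2) + (ν + 1 / 2) by ring,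
      Real.rpow_add ht (ν + 1 / 2) (ν + 1 / 2),
      show -(x * t / 2) ^ 2 = -(x / 2) ^ 2 * t ^ 2 by ring]
    ring
  have hq_pow : q ^ (ν + 1) = q ^ ((ν + 1) / 2) * q ^ ((ν + 1) / 2) := by
    rw [← Real.rpow_add hq, add_halves]
  have hexp : 2 * -(x / 2) ^ 2 / q = -(q⁻¹ * x ^ 2 / 2) := by
    field_simp
  rw [setIntegral_congr_fun measurableSet_Ioi hintegrand, integral_const_mul,
    integral_besselClifford_mul_gaussian hν hq, hexp, hankelGaussian, Real.inv_rpow hq.le,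
    Real.div_rpow hq.le two_pos.le, Real.rpow_neg hq.le, Real.rpow_neg two_pos.le,
    Real.rpow_neg two_pos.le, hq_pow, Real.rpow_add_one two_ne_zero]
  field_simp

theorem ae_eq_zero_of_forall_integral_mul_hankelGaussian {u : ℝ → ℂ}
    (hu : ∀ q > 0, IntegrableOn (fun x ↦ u x * (hankelGaussian ν q x : ℂ)) (Ioi 0))
    (hzero : ∀ q > 0, ∫ x in Ioi (0 : ℝ), u x * (hankelGaussian ν q x : ℂ) = 0) :
    u =ᵐ[vol₊] 0 := by
  have hpow (n : ℕ) (x : ℝ) : u x * (hankelGaussian ν (n + 1) x : ℂ) =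
      ((n + 1 : ℝ) ^ ((ν + 1) / 2)) •
        (Real.exp (-(x ^ 2 / 2)) ^ n • (u x * (hankelGaussian ν 1 x : ℂ))) := by
    have hexp : Real.exp (-((n + 1) * x ^ 2 / 2)) =
        Real.exp (-(x ^ 2 / 2)) ^ n * Real.exp (-(1 * x ^ 2 / 2)) := by
      rw [← Real.exp_nat_mul, ← Real.exp_add]
      ring_nf
    simp only [hankelGaussian, hexp, Complex.real_smul, Real.one_rpow]
    push_cast
    ring
  have hmul : (fun x ↦ u x * (hankelGaussian ν 1 x : ℂ)) =ᵐ[vol₊] 0 := by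
    refine ae_eq_zero_of_forall_integral_exp_neg_sq_pow_smul (hu 1 one_pos) fun n ↦ ?_
    have hn := hzero (n + 1) (by positivity)
    simp only [hpow, integral_smul] at hn
    exact (smul_eq_zero.1 hn).resolve_left (by positivity)
  filter_upwards [hmul, ae_restrict_mem measurableSet_Ioi] with x hx (hx_pos : 0 < x)
  refine (mul_eq_zero.1 hx).resolve_right (ofReal_ne_zero.2 ?_)
  unfold hankelGaussian
  positivity

theorem ae_eq_of_forall_integral_mul_hankelGaussian_eq {u v : ℝ → ℂ}
    (hu : ∀ q > 0, IntegrableOn (fun x ↦ u x * (hankelGaussian ν q x : ℂ)) (Ioi 0))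
    (hv : ∀ q > 0, IntegrableOn (fun x ↦ v x * (hankelGaussian ν q x : ℂ)) (Ioi 0))
    (huv : ∀ q > 0, ∫ x in Ioi (0 : ℝ), u x * (hankelGaussian ν q x : ℂ) =
      ∫ x in Ioi (0 : ℝ), v x * (hankelGaussian ν q x : ℂ)) :
    u =ᵐ[vol₊] v := by
  refine (sub_ae_eq_zero u v).1 (ae_eq_zero_of_forall_integral_mul_hankelGaussian (ν := ν)
    (fun q hq ↦ ?_) fun q hq ↦ ?_)
  · exact ((hu q hq).sub (hv q hq)).congr (.of_forall fun x ↦ (sub_mul _ _ _).symm)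
  · simp only [Pi.sub_apply, sub_mul]
    rw [integral_sub (hu q hq) (hv q hq), huv q hq, sub_self]

end HankelGaussian

section HankelTransform

variable {ν q : ℝ} {φ ψ : ℝ → ℂ}

/-- The Hankel transform of order `ν` in its symmetric form, for which Parseval's relation holds
with respect to Lebesgue measure on `(0, ∞)`. -/
noncomputable def hankelTransform (ν : ℝ) (φ : ℝ → ℂ) (x : ℝ) : ℂ :=
  ∫ t in Ioi (0 : ℝ), (hankelKernel ν (x * t) : ℂ) * φ t

theorem abs_hankelKernel_mul_hankelGaussian_le (hν : -1 < ν) (hq : 0 < q) {x t : ℝ}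
    (hx : 0 < x) (ht : 0 < t) :
    |hankelKernel ν (x * t) * hankelGaussian ν q x| ≤
      2 ^ (-ν) * q ^ ((ν + 1) / 2) / Real.Gamma (ν + 1) *
        (x ^ (2 * ν + 1) * Real.exp (-(q / 2 * x ^ 2 / 2))) *
        (t ^ (ν + 1 / 2) * Real.exp (t ^ 2 / (min 1 (ν + 1) * q))) := by
  have hmin : 0 < min 1 (ν + 1) := lt_min one_pos (by linarith)
  have hclifford : |besselClifford ν (-(x * t / 2) ^ 2)| ≤
      Real.exp (t ^ 2 / (min 1 (ν + 1) * q) + q * x ^ 2 / 4) / Real.Gamma (ν + 1) := by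
    refine abs_besselClifford_le hν (by positivity) (by positivity) (le_of_eq ?_)
    rw [abs_neg, abs_of_nonneg (by positivity)]
    field_simp
    norm_num
  have hexp : Real.exp (-(q / 2 * x ^ 2 / 2)) =
      Real.exp (q * x ^ 2 / 4) * Real.exp (-(q * x ^ 2 / 2)) := by
    rw [← Real.exp_add]
    ring_nf
  rw [hankelKernel_eq ν (mul_pos hx ht), hankelGaussian, abs_mul, abs_mul,
    abs_of_pos (a := 2 ^ (-ν) * _) (by positivity), abs_of_pos (a := _ * Real.exp _)
    (by positivity)]
  calc _ ≤ 2 ^ (-ν) * (x * t) ^ (ν + 1 / 2) *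
        (Real.exp (t ^ 2 / (min 1 (ν + 1) * q) + q * x ^ 2 / 4) / Real.Gamma (ν + 1)) *
        (q ^ ((ν + 1) / 2) * x ^ (ν + 1 / 2) * Real.exp (-(q * x ^ 2 / 2))) := by gcongr
    _ = _ := by
      rw [hexp, Real.exp_add, Real.mul_rpow hx.le ht.le,
        show 2 * ν + 1 = (ν + 1 / 2) + (ν + 1 / 2) by ring,
        Real.rpow_add hx (ν + 1 / 2) (ν + 1 / 2)]
      ring

theorem memLp_continuous_mul_of_hasCompactSupport {X 𝕜 : Type*} [TopologicalSpace X]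
    [MeasurableSpace X] [OpensMeasurableSpace X] [RCLike 𝕜] {μ : Measure X} {p : ENNReal}
    {c φ : X → 𝕜} (hc : Continuous c) (hφ : MemLp φ p μ) (hφ_supp : HasCompactSupport φ) :
    MemLp (fun t ↦ c t * φ t) p μ := by
  obtain ⟨C, hC⟩ := hφ_supp.isCompact.exists_bound_of_continuousOn hc.continuousOn
  refine hφ.of_le_mul (c := C) (hc.aestronglyMeasurable.mul hφ.aestronglyMeasurable)
    (.of_forall fun t ↦ ?_)
  rw [norm_mul]
  by_cases ht : t ∈ tsupport φ
  · gcongr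
    exact hC t ht
  · simp [image_eq_zero_of_notMem_tsupport ht]

theorem integrableOn_rpow_mul_exp_sq_mul (hν : -1 < ν) (hφ : MemLp φ 2 vol₊)
    (hφ_supp : HasCompactSupport φ) (c : ℝ) :
    IntegrableOn (fun t ↦ ((t ^ (ν + 1 / 2) * Real.exp (t ^ 2 / c) : ℝ) : ℂ) * φ t) (Ioi 0) := by
  have hexp : Continuous fun t : ℝ ↦ ((Real.exp (t ^ 2 / c + t ^ 2 / 2) : ℝ) : ℂ) := by fun_prop
  refine ((memLp_hankelGaussian hν one_pos).integrable_mul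
    (memLp_continuous_mul_of_hasCompactSupport hexp hφ hφ_supp)).congr (.of_forall fun t ↦ ?_)
  simp only [Pi.mul_apply, hankelGaussian, Real.one_rpow, one_mul, Real.exp_add, Real.exp_neg]
  push_cast
  field_simp

theorem integrable_hankelKernel_mul_mul_hankelGaussian (hν : -1 < ν) (hq : 0 < q)
    (hφ : MemLp φ 2 vol₊) (hφ_supp : HasCompactSupport φ) :
    Integrable (Function.uncurry fun x t ↦
      (hankelKernel ν (x * t) : ℂ) * φ t * (hankelGaussian ν q x : ℂ)) (vol₊.prod vol₊) := by
  have hx_int := (integrableOn_rpow_mul_exp_neg_mul_sq_half hν (half_pos hq)).const_mul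
    (2 ^ (-ν) * q ^ ((ν + 1) / 2) / Real.Gamma (ν + 1))
  have ht_int := integrableOn_rpow_mul_exp_sq_mul hν hφ hφ_supp (min 1 (ν + 1) * q)
  have hkernel : Measurable fun z : ℝ × ℝ ↦ (hankelKernel ν (z.1 * z.2) : ℂ) :=
    measurable_ofReal.comp ((measurable_hankelKernel ν).comp measurable_mul)
  have hgaussian : Measurable fun z : ℝ × ℝ ↦ (hankelGaussian ν q z.1 : ℂ) :=
    measurable_ofReal.comp ((measurable_hankelGaussian ν q).comp measurable_fst)
  refine (hx_int.mul_prod ht_int.norm).mono'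
    ((hkernel.aestronglyMeasurable.mul hφ.aestronglyMeasurable.comp_snd).mul
      hgaussian.aestronglyMeasurable) ?_
  rw [Measure.prod_restrict]
  filter_upwards [ae_restrict_mem (measurableSet_Ioi.prod measurableSet_Ioi)]
    with ⟨x, t⟩ ⟨(hx : 0 < x), (ht : 0 < t)⟩
  have hbound := abs_hankelKernel_mul_hankelGaussian_le hν hq hx ht
  rw [abs_mul] at hbound
  rw [Function.uncurry_apply_pair, mul_right_comm, norm_mul, norm_mul, norm_mul, norm_real,
    norm_real, norm_real, Real.norm_of_nonneg (r := t ^ _ * _) (by positivity), ← mul_assoc]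
  exact mul_le_mul_of_nonneg_right hbound (norm_nonneg _)

theorem hankelTransform_mul (ν : ℝ) (φ : ℝ → ℂ) (x : ℝ) (a : ℂ) :
    hankelTransform ν φ x * a =
      ∫ t in Ioi (0 : ℝ), (hankelKernel ν (x * t) : ℂ) * φ t * a :=
  (integral_mul_const a _).symm

theorem integrableOn_hankelTransform_mul_hankelGaussian (hν : -1 < ν) (hq : 0 < q)
    (hφ : MemLp φ 2 vol₊) (hφ_supp : HasCompactSupport φ) :
    IntegrableOn (fun x ↦ hankelTransform ν φ x * (hankelGaussian ν q x : ℂ)) (Ioi 0) := by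
  simp only [hankelTransform_mul]
  exact (integrable_hankelKernel_mul_mul_hankelGaussian hν hq hφ hφ_supp).integral_prod_left

theorem integral_hankelTransform_mul_hankelGaussian (hν : -1 < ν) (hq : 0 < q)
    (hφ : MemLp φ 2 vol₊) (hφ_supp : HasCompactSupport φ) :
    ∫ x in Ioi (0 : ℝ), hankelTransform ν φ x * (hankelGaussian ν q x : ℂ) =
      ∫ t in Ioi (0 : ℝ), φ t * (hankelGaussian ν q⁻¹ t : ℂ) := by
  simp only [hankelTransform_mul]
  rw [integral_integral_swap (integrable_hankelKernel_mul_mul_hankelGaussian hν hq hφ hφ_supp)]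
  refine setIntegral_congr_fun measurableSet_Ioi fun t (ht : 0 < t) ↦ ?_
  rw [← integral_hankelKernel_mul_hankelGaussian hν hq ht, ← integral_complex_ofReal,
    ← integral_const_mul]
  congr 1 with x
  rw [mul_comm t x, ofReal_mul]
  ring

/-- The function `hankelGaussian ν q` as an element of `L²(0, ∞)`. -/
noncomputable def hankelGaussianLp (hν : -1 < ν) (q : {q : ℝ // 0 < q}) : Lp ℂ 2 vol₊ :=
  (memLp_hankelGaussian hν q.2).toLp _

theorem integrableOn_mul_hankelGaussian (hν : -1 < ν) (hq : 0 < q) (u : Lp ℂ 2 vol₊) :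
    IntegrableOn (fun x ↦ u x * (hankelGaussian ν q x : ℂ)) (Ioi 0) :=
  (Lp.memLp u).integrable_mul (memLp_hankelGaussian hν hq)

theorem inner_hankelGaussianLp_left (hν : -1 < ν) (q : {q : ℝ // 0 < q}) (u : Lp ℂ 2 vol₊) :
    inner ℂ (hankelGaussianLp hν q) u = ∫ x in Ioi (0 : ℝ), u x * (hankelGaussian ν q x : ℂ) := by
  rw [L2.inner_def]
  refine integral_congr_ae ?_
  filter_upwards [(memLp_hankelGaussian hν q.2).coeFn_toLp] with x hx
  rw [hankelGaussianLp, hx, RCLike.inner_apply, conj_ofReal]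

theorem inner_hankelGaussianLp_left_toLp (hν : -1 < ν) (q : {q : ℝ // 0 < q})
    (hφ : MemLp φ 2 vol₊) :
    inner ℂ (hankelGaussianLp hν q) (hφ.toLp φ) =
      ∫ x in Ioi (0 : ℝ), φ x * (hankelGaussian ν q x : ℂ) := by
  rw [inner_hankelGaussianLp_left]
  refine integral_congr_ae ?_
  filter_upwards [hφ.coeFn_toLp] with x hx
  rw [hx]

theorem inner_hankelGaussianLp_inv_inv (hν : -1 < ν) (p q : {q : ℝ // 0 < q}) :
    inner ℂ (hankelGaussianLp hν p⁻¹) (hankelGaussianLp hν q⁻¹) =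
      inner ℂ (hankelGaussianLp hν p) (hankelGaussianLp hν q) := by
  have hgram (p q : {q : ℝ // 0 < q}) : inner ℂ (hankelGaussianLp hν p) (hankelGaussianLp hν q) =
      ((∫ x in Ioi (0 : ℝ), hankelGaussian ν q x * hankelGaussian ν p x : ℝ) : ℂ) := by
    refine (inner_hankelGaussianLp_left_toLp hν p (memLp_hankelGaussian hν q.2)).trans ?_
    rw [← integral_complex_ofReal]
    simp only [ofReal_mul]
  rw [hgram, hgram, Positive.coe_inv, Positive.coe_inv,
    integral_hankelGaussian_inv_mul_inv hν q.2 p.2]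

theorem dense_span_range_hankelGaussianLp (hν : -1 < ν) :
    Dense (Submodule.span ℂ (range (hankelGaussianLp hν)) : Set (Lp ℂ 2 vol₊)) := by
  rw [Submodule.dense_iff_topologicalClosure_eq_top, Submodule.topologicalClosure_eq_top_iff,
    Submodule.eq_bot_iff]
  intro u hu
  refine (Lp.eq_zero_iff_ae_eq_zero).2 (ae_eq_zero_of_forall_integral_mul_hankelGaussian
    (fun q hq ↦ integrableOn_mul_hankelGaussian hν hq u) fun q hq ↦ ?_)
  rw [← inner_hankelGaussianLp_left hν ⟨q, hq⟩]
  exact hu _ (Submodule.subset_span (mem_range_self _))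

theorem exists_linearIsometry_eq_hankelTransform (hν : -1 < ν) :
    ∃ U : Lp ℂ 2 vol₊ →ₗᵢ[ℂ] Lp ℂ 2 vol₊, ∀ (φ : ℝ → ℂ) (hφ : MemLp φ 2 vol₊),
      HasCompactSupport φ → U (hφ.toLp φ) =ᵐ[vol₊] hankelTransform ν φ := by
  obtain ⟨U, hU⟩ := exists_linearIsometry_apply_eq (dense_span_range_hankelGaussianLp hν)
    (inner_hankelGaussianLp_inv_inv hν)
  refine ⟨U, fun φ hφ hφ_supp ↦ ae_eq_of_forall_integral_mul_hankelGaussian_eq (ν := ν)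
    (fun q hq ↦ integrableOn_mul_hankelGaussian hν hq _)
    (fun q hq ↦ integrableOn_hankelTransform_mul_hankelGaussian hν hq hφ hφ_supp)
    fun q hq ↦ ?_⟩
  let r : {q : ℝ // 0 < q} := ⟨q, hq⟩
  calc ∫ x in Ioi (0 : ℝ), U (hφ.toLp φ) x * (hankelGaussian ν q x : ℂ)
    _ = inner ℂ (hankelGaussianLp hν r) (U (hφ.toLp φ)) :=
      (inner_hankelGaussianLp_left hν r _).symm
    _ = inner ℂ (U (hankelGaussianLp hν r⁻¹)) (U (hφ.toLp φ)) := by rw [hU, inv_inv]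
    _ = inner ℂ (hankelGaussianLp hν r⁻¹) (hφ.toLp φ) := U.inner_map_map _ _
    _ = ∫ t in Ioi (0 : ℝ), φ t * (hankelGaussian ν q⁻¹ t : ℂ) :=
      inner_hankelGaussianLp_left_toLp hν r⁻¹ hφ
    _ = _ := (integral_hankelTransform_mul_hankelGaussian hν hq hφ hφ_supp).symm

theorem integral_mul_conj_eq_integral_hankelTransform (hν : -1 < ν)
    (hφ : MemLp φ 2 vol₊) (hφ_supp : HasCompactSupport φ)
    (hψ : MemLp ψ 2 vol₊) (hψ_supp : HasCompactSupport ψ) :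
    ∫ t in Ioi (0 : ℝ), φ t * (starRingEnd ℂ) (ψ t) =
      ∫ x in Ioi (0 : ℝ), hankelTransform ν φ x * (starRingEnd ℂ) (hankelTransform ν ψ x) := by
  obtain ⟨U, hU⟩ := exists_linearIsometry_eq_hankelTransform hν
  have hinner := U.inner_map_map (hψ.toLp ψ) (hφ.toLp φ)
  rw [L2.inner_def, L2.inner_def] at hinner
  calc ∫ t in Ioi (0 : ℝ), φ t * (starRingEnd ℂ) (ψ t)
    _ = ∫ t in Ioi (0 : ℝ), inner ℂ (hψ.toLp ψ t) (hφ.toLp φ t) := by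
      refine integral_congr_ae ?_
      filter_upwards [hφ.coeFn_toLp, hψ.coeFn_toLp] with t hφt hψt
      rw [hφt, hψt, RCLike.inner_apply]
    _ = ∫ x in Ioi (0 : ℝ), inner ℂ (U (hψ.toLp ψ) x) (U (hφ.toLp φ) x) := hinner.symm
    _ = _ := by
      refine integral_congr_ae ?_
      filter_upwards [hU φ hφ hφ_supp, hU ψ hψ hψ_supp] with x hφx hψx
      rw [hφx, hψx, RCLike.inner_apply]

end HankelTransform

section FractionalHankelTransform

variable {ν μ θ : ℝ}

/-- The chirp `exp((i/2) t² cot θ)`. -/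
noncomputable def chirp (θ t : ℝ) : ℂ :=
  exp ((I / 2) * (t : ℂ) ^ 2 * (Real.cot θ : ℂ))

/-- The function `exp((i/2) t² cot θ) t^(μ+1/2) f(t)` whose Hankel transform is, up to a dilation
and a factor, the fractional Hankel transform of `f`. -/
noncomputable def chirpWeight (μ θ : ℝ) (f : ℝ → ℂ) (t : ℝ) : ℂ :=
  chirp θ t * (((t ^ (μ + 1 / 2) : ℝ) : ℂ) * f t)

/-- The factor relating the fractional Hankel transform of `f` at `ω` to the Hankel transform of
`chirpWeight μ θ f` at `ω / sin θ`. -/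
noncomputable def fracHankelFactor (ν μ θ ω : ℝ) : ℂ :=
  fracHankelConst ν μ θ * chirp θ ω * (((ω * (Real.sin θ)⁻¹) ^ (-(μ + 1 / 2)) : ℝ) : ℂ)

theorem continuous_chirp (θ : ℝ) : Continuous (chirp θ) := by
  unfold chirp
  fun_prop

theorem norm_chirp (θ t : ℝ) : ‖chirp θ t‖ = 1 := by
  rw [chirp, show I / 2 * (t : ℂ) ^ 2 * (Real.cot θ : ℂ) =
    ((t ^ 2 * Real.cot θ / 2 : ℝ) : ℂ) * I by push_cast; ring, norm_exp_ofReal_mul_I]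

theorem norm_fracHankelConst (ν μ : ℝ) (hθ : 0 < Real.sin θ) :
    ‖fracHankelConst ν μ θ‖ = (Real.sin θ ^ (1 + μ))⁻¹ := by
  rw [fracHankelConst, norm_div, show I * ((1 + ν : ℝ) : ℂ) * ((θ - Real.pi / 2 : ℝ) : ℂ) =
    (((1 + ν) * (θ - Real.pi / 2) : ℝ) : ℂ) * I by push_cast; ring, norm_exp_ofReal_mul_I,
    norm_real, Real.norm_of_nonneg (by positivity), one_div]

theorem mul_mul_conj_mul (a z w : ℂ) :
    a * z * (starRingEnd ℂ) (a * w) = ((‖a‖ ^ 2 : ℝ) : ℂ) * (z * (starRingEnd ℂ) w) := by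
  rw [ofReal_pow, ← mul_conj', map_mul]
  ring

theorem norm_fracHankelFactor_sq_mul_rpow (ν μ : ℝ) (hθ : 0 < Real.sin θ) {ω : ℝ}
    (hω : 0 < ω) : ‖fracHankelFactor ν μ θ ω‖ ^ 2 * ω ^ (1 + 2 * μ) = (Real.sin θ)⁻¹ := by
  have hsin : Real.sin θ ^ (1 + μ) = Real.sin θ ^ (μ + 1 / 2) * Real.sin θ ^ (1 / 2 : ℝ) := by
    rw [← Real.rpow_add hθ]
    ring_nf
  have hsqrt : (Real.sin θ ^ (1 / 2 : ℝ)) ^ 2 = Real.sin θ := by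
    rw [← Real.sqrt_eq_rpow, Real.sq_sqrt hθ.le]
  have hω_pow : ω ^ (1 + 2 * μ) = (ω ^ (μ + 1 / 2)) ^ 2 := by
    rw [← Real.rpow_mul_natCast hω.le]
    push_cast
    ring_nf
  rw [fracHankelFactor, norm_mul, norm_mul, norm_chirp, norm_fracHankelConst ν μ hθ, norm_real,
    Real.norm_of_nonneg (by positivity), Real.rpow_neg (by positivity), Real.mul_rpow hω.le
    (by positivity), Real.inv_rpow hθ.le, hsin, hω_pow]
  calc _ = ((Real.sin θ ^ (1 / 2 : ℝ)) ^ 2)⁻¹ := by field_simp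
    _ = _ := by rw [hsqrt]

theorem fracHankelKernel_mul (ν μ : ℝ) (hθ : 0 < Real.sin θ) (f : ℝ → ℂ) {t ω : ℝ} (ht : 0 < t)
    (hω : 0 < ω) :
    fracHankelKernel ν μ θ t ω * f t = fracHankelFactor ν μ θ ω *
      ((hankelKernel ν (ω * (Real.sin θ)⁻¹ * t) : ℂ) * chirpWeight μ θ f t) := by
  have hx : 0 < ω * (Real.sin θ)⁻¹ := by positivity
  have hchirp : exp ((I / 2) * ((t : ℂ) ^ 2 + (ω : ℂ) ^ 2) * (Real.cot θ : ℂ)) =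
      chirp θ t * chirp θ ω := by
    rw [chirp, chirp, ← exp_add]
    ring_nf
  have hpow : (ω * (Real.sin θ)⁻¹ * t) ^ (-μ) * t ^ (1 + 2 * μ) =
      (ω * (Real.sin θ)⁻¹) ^ (-(μ + 1 / 2)) * √(ω * (Real.sin θ)⁻¹ * t) * t ^ (μ + 1 / 2) := by
    rw [Real.sqrt_eq_rpow, Real.mul_rpow hx.le ht.le, Real.mul_rpow hx.le ht.le,
      mul_assoc, ← Real.rpow_add ht, ← mul_assoc, ← Real.rpow_add hx, mul_assoc,
      ← Real.rpow_add ht]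
    ring_nf
  have hpow' := congrArg ofReal hpow
  push_cast at hpow'
  rw [fracHankelKernel, hchirp, fracHankelFactor, hankelKernel, chirpWeight,
    show t * ω * (Real.sin θ)⁻¹ = ω * (Real.sin θ)⁻¹ * t by ring]
  push_cast
  linear_combination fracHankelConst ν μ θ * chirp θ t * chirp θ ω *
    (besselJ ν (ω * (Real.sin θ)⁻¹ * t) : ℂ) * f t * hpow'

theorem fracHankel_eq_hankelTransform_chirpWeight (ν μ : ℝ) (hθ : 0 < Real.sin θ) (f : ℝ → ℂ)
    {ω : ℝ} (hω : 0 < ω) :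
    fracHankel ν μ θ f ω = fracHankelFactor ν μ θ ω *
      hankelTransform ν (chirpWeight μ θ f) (ω * (Real.sin θ)⁻¹) := by
  rw [fracHankel, hankelTransform, ← integral_const_mul]
  exact setIntegral_congr_fun measurableSet_Ioi fun t ht ↦ fracHankelKernel_mul ν μ hθ f ht hω

theorem chirpWeight_mul_conj (μ θ : ℝ) (f g : ℝ → ℂ) {t : ℝ} (ht : 0 < t) :
    chirpWeight μ θ f t * (starRingEnd ℂ) (chirpWeight μ θ g t) =
      f t * (starRingEnd ℂ) (g t) * ((t ^ (1 + 2 * μ) : ℝ) : ℂ) := by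
  have hpow : t ^ (1 + 2 * μ) = (t ^ (μ + 1 / 2)) ^ 2 := by
    rw [← Real.rpow_mul_natCast ht.le]
    push_cast
    ring_nf
  rw [chirpWeight, chirpWeight, mul_mul_conj_mul, mul_mul_conj_mul, norm_chirp, norm_real,
    Real.norm_of_nonneg (by positivity), hpow, one_pow, ofReal_one, one_mul, mul_comm]

theorem fracHankel_mul_conj (ν μ : ℝ) (hθ : 0 < Real.sin θ) (f g : ℝ → ℂ) {ω : ℝ} (hω : 0 < ω) :
    fracHankel ν μ θ f ω * (starRingEnd ℂ) (fracHankel ν μ θ g ω) *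
        ((ω ^ (1 + 2 * μ) : ℝ) : ℂ) =
      (Real.sin θ)⁻¹ • (hankelTransform ν (chirpWeight μ θ f) (ω * (Real.sin θ)⁻¹) *
        (starRingEnd ℂ) (hankelTransform ν (chirpWeight μ θ g) (ω * (Real.sin θ)⁻¹))) := by
  rw [fracHankel_eq_hankelTransform_chirpWeight ν μ hθ f hω,
    fracHankel_eq_hankelTransform_chirpWeight ν μ hθ g hω, mul_mul_conj_mul, mul_right_comm,
    ← ofReal_mul, norm_fracHankelFactor_sq_mul_rpow ν μ hθ hω, real_smul]

theorem integral_fracHankel_mul_conj (ν μ : ℝ) (hθ : 0 < Real.sin θ) (f g : ℝ → ℂ) :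
    ∫ ω in Ioi (0 : ℝ), fracHankel ν μ θ f ω * (starRingEnd ℂ) (fracHankel ν μ θ g ω) *
        ((ω ^ (1 + 2 * μ) : ℝ) : ℂ) =
      ∫ x in Ioi (0 : ℝ), hankelTransform ν (chirpWeight μ θ f) x *
        (starRingEnd ℂ) (hankelTransform ν (chirpWeight μ θ g) x) := by
  rw [setIntegral_congr_fun measurableSet_Ioi fun ω hω ↦ fracHankel_mul_conj ν μ hθ f g hω,
    integral_smul, integral_comp_mul_right_Ioi (fun x ↦ hankelTransform ν (chirpWeight μ θ f) x *
      (starRingEnd ℂ) (hankelTransform ν (chirpWeight μ θ g) x)) 0 (inv_pos.2 hθ), zero_mul,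
    inv_inv, inv_smul_smul₀ hθ.ne']

theorem memLp_rpow_mul_of_tsupport_subset_Ioi (r : ℝ) {f : ℝ → ℂ} (hf : Continuous f)
    (hf_supp : HasCompactSupport f) (hf_sub : tsupport f ⊆ Ioi 0) (p : ENNReal) :
    MemLp (fun t ↦ ((t ^ r : ℝ) : ℂ) * f t) p vol₊ := by
  have hcont : Continuous fun t ↦ ((t ^ r : ℝ) : ℂ) * f t := by
    refine continuous_of_tsupport fun t ht ↦ ?_
    have ht_pos : t ≠ 0 := (hf_sub (tsupport_mul_subset_right ht)).ne'
    have := Real.continuousAt_rpow_const t r (.inl ht_pos)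
    fun_prop
  exact (hcont.memLp_of_hasCompactSupport hf_supp.mul_left).restrict _

end FractionalHankelTransform

theorem stmt_9_general {ν μ θ : ℝ} (hν : -1 < ν) (hθ : 0 < Real.sin θ) {f g : ℝ → ℂ}
    (hf : MemLp (fun t ↦ ((t ^ (μ + 1 / 2) : ℝ) : ℂ) * f t) 2 (volume.restrict (Ioi 0)))
    (hf_supp : HasCompactSupport f)
    (hg : MemLp (fun t ↦ ((t ^ (μ + 1 / 2) : ℝ) : ℂ) * g t) 2 (volume.restrict (Ioi 0)))
    (hg_supp : HasCompactSupport g) :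
    ∫ t in Ioi (0 : ℝ), f t * (starRingEnd ℂ) (g t) * ((t ^ (1 + 2 * μ) : ℝ) : ℂ) =
      ∫ ω in Ioi (0 : ℝ), fracHankel ν μ θ f ω *
        (starRingEnd ℂ) (fracHankel ν μ θ g ω) * ((ω ^ (1 + 2 * μ) : ℝ) : ℂ) := by
  have hf_chirp : MemLp (chirpWeight μ θ f) 2 vol₊ :=
    memLp_continuous_mul_of_hasCompactSupport (continuous_chirp θ) hf hf_supp.mul_left
  have hg_chirp : MemLp (chirpWeight μ θ g) 2 vol₊ :=
    memLp_continuous_mul_of_hasCompactSupport (continuous_chirp θ) hg hg_supp.mul_left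
  rw [integral_fracHankel_mul_conj ν μ hθ,
    ← integral_mul_conj_eq_integral_hankelTransform hν hf_chirp hf_supp.mul_left.mul_left hg_chirp
      hg_supp.mul_left.mul_left]
  exact setIntegral_congr_fun measurableSet_Ioi
    fun t ht ↦ (chirpWeight_mul_conj μ θ f g ht).symm

theorem stmt_9 (ν μ θ : ℝ) (hν : -(1 / 2 : ℝ) ≤ ν) (hθ1 : 0 < θ) (hθ2 : θ < Real.pi)
    (hθ : Real.sin θ ≠ 0)
    (f g : ℝ → ℂ) (hf : ContDiff ℝ (⊤ : ℕ∞) f) (hfc : HasCompactSupport f)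
    (hfs : tsupport f ⊆ Set.Ioi 0)
    (hg : ContDiff ℝ (⊤ : ℕ∞) g) (hgc : HasCompactSupport g)
    (hgs : tsupport g ⊆ Set.Ioi 0) :
    ∫ t in Set.Ioi (0 : ℝ), f t * (starRingEnd ℂ) (g t) * ((t ^ (1 + 2 * μ) : ℝ) : ℂ) =
      ∫ ω in Set.Ioi (0 : ℝ), fracHankel ν μ θ f ω *
        (starRingEnd ℂ) (fracHankel ν μ θ g ω) * ((ω ^ (1 + 2 * μ) : ℝ) : ℂ) :=
  stmt_9_general (by linarith) (Real.sin_pos_of_pos_of_lt_pi hθ1 hθ2)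
    (memLp_rpow_mul_of_tsupport_subset_Ioi _ hf.continuous hfc hfs 2) hfc
    (memLp_rpow_mul_of_tsupport_subset_Ioi _ hg.continuous hgc hgs 2) hgc
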